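/- arXiv:1708.03924 — 2 statements merged into one kernel-verified Lean document; each statement's English description precedes it below -/
import Mathlib

section
/- For each positive integer k, define f_k : 𝔻 → ℂ by f_k(x+iy) = kx + i·y/k. Then each f_k is harmonic and injective on 𝔻, with f_k(0) = 0 and J_{f_k}(0) = 1, and every open disk contained in the image f_k(𝔻) has radius at most 1/k. Consequently there is no constant r₀ > 0 such that 𝔻_{r₀} ⊆ f_k(𝔻) for all k. -/
open Metric MeasureTheory Set Filter

noncomputable section

/-- The Wirtinger derivative `∂f/∂z = (f_x - i f_y)/2`. -/
def wdz (f : ℂ → ℂ) (z : ℂ) : ℂ :=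
  (fderiv ℝ f z 1 - Complex.I * fderiv ℝ f z Complex.I) / 2

/-- The Wirtinger derivative `∂f/∂z̄ = (f_x + i f_y)/2`. -/
def wdzbar (f : ℂ → ℂ) (z : ℂ) : ℂ :=
  (fderiv ℝ f z 1 + Complex.I * fderiv ℝ f z Complex.I) / 2

/-- The Laplacian `Δf = f_xx + f_yy` (equivalently `4 f_{z z̄}`). -/
def lap (f : ℂ → ℂ) (z : ℂ) : ℂ :=
  fderiv ℝ (fun w => fderiv ℝ f w 1) z 1 +
    fderiv ℝ (fun w => fderiv ℝ f w Complex.I) z Complex.I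

/-- The Poisson integral `P_ψ(z) = (1/2π) ∫₀^{2π} ((1-|z|²)/|1-z e^{-it}|²) ψ(e^{it}) dt`. -/
def poissonIntegral (ψ : ℂ → ℂ) (z : ℂ) : ℂ :=
  (1 / (2 * Real.pi) : ℝ) • ∫ t in (0:ℝ)..(2 * Real.pi),
    (((1 - ‖z‖ ^ 2) / ‖1 - z * Complex.exp (-(Complex.I * (t : ℂ)))‖ ^ 2 : ℝ) : ℂ) *
      ψ (Complex.exp (Complex.I * (t : ℂ)))

/-- The Green potential `G_g(z) = (1/2π) ∫_𝔻 log|(1 - z w̄)/(z - w)| g(w) dA(w)`. -/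
def greenPotential (g : ℂ → ℂ) (z : ℂ) : ℂ :=
  (1 / (2 * Real.pi) : ℝ) • ∫ w in ball (0:ℂ) 1,
    ((Real.log ‖(1 - z * (starRingEnd ℂ) w) / (z - w)‖ : ℝ) : ℂ) * g w

/-- `sup_{z ∈ 𝔻} |g(z)|`. -/
def supD (g : ℂ → ℂ) : ℝ := sSup ((fun z => ‖g z‖) '' ball (0:ℂ) 1)

/-- The function `μ(r)` with constant `c` in place of `‖g‖_∞`. -/
def mu (c r : ℝ) : ℝ :=
  c * (1 - r ^ 2) / (8 * r ^ 2) *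
    ((1 + r ^ 2) / (1 - r ^ 2) - (1 - r ^ 2) / (2 * r) * Real.log ((1 + r) / (1 - r)))

/-- The linear map underlying `f k`. -/
def fkL (k : ℕ) : ℂ →L[ℝ] ℂ :=
  (k : ℂ) • (Complex.ofRealCLM.comp Complex.reCLM) +
    (Complex.I / (k : ℂ)) • (Complex.ofRealCLM.comp Complex.imCLM)

theorem fkL_apply (k : ℕ) (z : ℂ) :
    fkL k z = (k : ℂ) * (z.re : ℂ) + Complex.I / (k : ℂ) * (z.im : ℂ) := by
  simp [fkL]

/-- Example 1.10: the harmonic mappings `f_k(x+iy) = kx + iy/k` show the failure of a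
uniform Landau type theorem. -/
theorem stmt17 (f : ℕ → ℂ → ℂ)
    (hf : ∀ k : ℕ, ∀ z : ℂ, f k z = (k : ℂ) * (z.re : ℂ) + Complex.I * ((z.im : ℝ) / k : ℝ)) :
    (∀ k : ℕ, 0 < k →
      ContDiffOn ℝ 2 (f k) (ball (0:ℂ) 1) ∧
      (∀ z ∈ ball (0:ℂ) 1, lap (f k) z = 0) ∧
      Set.InjOn (f k) (ball (0:ℂ) 1) ∧
      f k 0 = 0 ∧
      ‖wdz (f k) 0‖ ^ 2 - ‖wdzbar (f k) 0‖ ^ 2 = 1 ∧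
      (∀ (c : ℂ) (ρ : ℝ), ball c ρ ⊆ f k '' ball (0:ℂ) 1 → ρ ≤ 1 / k)) ∧
    ¬ ∃ r₀ : ℝ, 0 < r₀ ∧ ∀ k : ℕ, 0 < k → ball (0:ℂ) r₀ ⊆ f k '' ball (0:ℂ) 1 := by
  have hL : ∀ k, f k = fkL k := by
    intro k
    funext z
    rw [hf, fkL_apply]
    push_cast
    ring
  have him : ∀ k z, (f k z).im = z.im / k := by
    intro k z
    rw [hf]
    simp [← Complex.ofReal_natCast, -Complex.ofReal_div]
  have hre : ∀ k z, (f k z).re = k * z.re := by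
    intro k z
    rw [hf]
    simp [← Complex.ofReal_natCast, -Complex.ofReal_div]
  have hd : ∀ k w, fderiv ℝ (f k) w = fkL k := by
    intro k w
    rw [hL]
    exact (fkL k).fderiv
  have hrad : ∀ k : ℕ, 0 < k → ∀ (c : ℂ) (ρ : ℝ),
      ball c ρ ⊆ f k '' ball (0:ℂ) 1 → ρ ≤ 1 / k := by
    intro k hk c ρ h
    have hk' : (0:ℝ) < k := by exact_mod_cast hk
    by_contra hlt
    push Not at hlt
    obtain ⟨s, hs1, hs2⟩ := exists_between hlt
    have hs0 : 0 < s := lt_trans (by positivity) hs1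
    have key : ∀ w ∈ ball c ρ, |w.im| < 1 / k := by
      intro w hw
      obtain ⟨z, hz, rfl⟩ := h hw
      rw [him, abs_div, abs_of_pos hk']
      have hz1 : ‖z‖ < 1 := by simpa using hz
      have := (Complex.abs_im_le_norm z).trans_lt hz1
      gcongr
    have h1 := key (c + s * Complex.I) (by simp [abs_of_pos hs0, hs2])
    have h2 := key (c - s * Complex.I) (by
      simp [mem_ball, dist_eq_norm, abs_of_pos hs0, hs2])
    simp only [Complex.add_im, Complex.sub_im, Complex.mul_im, Complex.ofReal_re, Complex.I_im,
      Complex.ofReal_im, Complex.I_re, mul_one, mul_zero, add_zero] at h1 h2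
    have h1 := (abs_lt.1 h1).2
    have h2 := (abs_lt.1 h2).1
    linarith
  refine ⟨?_, ?_⟩
  · intro k hk
    have hk' : (k:ℝ) ≠ 0 := by exact_mod_cast hk.ne'
    have hkc : (k:ℂ) ≠ 0 := by exact_mod_cast hk.ne'
    refine ⟨?_, ?_, ?_, ?_, ?_, hrad k hk⟩
    · rw [hL]
      exact (fkL k).contDiff.contDiffOn
    · intro z _
      simp [lap, hd]
    · intro z _ w _ h
      apply Complex.ext
      · have := congrArg Complex.re h
        rw [hre, hre] at this
        exact mul_left_cancel₀ hk' this
      · have := congrArg Complex.im h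
        rw [him, him] at this
        field_simp at this
        exact this
    · simp [hf]
    · have e1 : wdz (f k) 0 = (((k:ℝ) + 1 / k) / 2 : ℝ) := by
        simp only [wdz, hd, fkL_apply]
        simp
        field_simp
        linear_combination (-1 : ℂ) * Complex.I_sq
      have e2 : wdzbar (f k) 0 = (((k:ℝ) - 1 / k) / 2 : ℝ) := by
        simp only [wdzbar, hd, fkL_apply]
        simp
        field_simp
        linear_combination Complex.I_sq
      rw [e1, e2, Complex.norm_real, Complex.norm_real, Real.norm_eq_abs, Real.norm_eq_abs,
        sq_abs, sq_abs]
      field_simp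
      ring
  · rintro ⟨r, hr, h⟩
    obtain ⟨n, hn⟩ := exists_nat_one_div_lt hr
    have := hrad (n + 1) n.succ_pos 0 r (h (n + 1) n.succ_pos)
    push_cast at this
    linarith
end
end

section
/- For each positive integer k, define f_k : 𝔻 → ℂ by f_k(x+iy) = kx + |x+iy|²/4 + i·y/k. Then each f_k satisfies Δf_k ≡ 1 on 𝔻, is injective on 𝔻, and satisfies f_k(0) = 0 and J_{f_k}(0) = 1; and there is no constant ρ₀ > 0 such that 𝔻_{ρ₀} ⊆ f_k(𝔻) for all k. -/
open Metric MeasureTheory Set Filter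

noncomputable section

theorem fk_hasFDerivAt (a b : ℝ) (w : ℂ) :
    HasFDerivAt (fun z : ℂ => (((a * z.re + (z.re * z.re + z.im * z.im) / 4 : ℝ)) : ℂ)
        + Complex.I * ((b * z.im : ℝ) : ℂ))
      (Complex.ofRealCLM.comp (a • Complex.reCLM + (1 / 2 : ℝ) •
        (w.re • Complex.reCLM + w.im • Complex.imCLM))
        + Complex.I • Complex.ofRealCLM.comp (b • Complex.imCLM)) w := by
  have hr : HasFDerivAt (fun z : ℂ => z.re) Complex.reCLM w := Complex.reCLM.hasFDerivAt
  have hi : HasFDerivAt (fun z : ℂ => z.im) Complex.imCLM w := Complex.imCLM.hasFDerivAt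
  have h1 := (hr.const_mul a).add (((hr.mul hr).add (hi.mul hi)).mul_const (1 / 4 : ℝ))
  have h2 := (Complex.ofRealCLM.hasFDerivAt.comp w h1).add
    ((Complex.ofRealCLM.hasFDerivAt.comp w (hi.const_mul b)).const_mul Complex.I)
  refine (h2.congr_fderiv ?_).congr_of_eventuallyEq (Eventually.of_forall fun z => ?_)
  · ext v <;> simp <;> ring
  · simp [div_eq_mul_inv]

/-- Example 1.9: the mappings `f_k(x+iy) = kx + |x+iy|²/4 + iy/k` solve `Δf = 1` and show
the failure of a uniform Landau type theorem. -/
theorem stmt18 (f : ℕ → ℂ → ℂ)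
    (hf : ∀ k : ℕ, ∀ z : ℂ,
      f k z = (k : ℂ) * (z.re : ℂ) + ((‖z‖ ^ 2 / 4 : ℝ) : ℂ) +
        Complex.I * ((z.im : ℝ) / k : ℝ)) :
    (∀ k : ℕ, 0 < k →
      (∀ z ∈ ball (0:ℂ) 1, lap (f k) z = 1) ∧
      Set.InjOn (f k) (ball (0:ℂ) 1) ∧
      f k 0 = 0 ∧
      ‖wdz (f k) 0‖ ^ 2 - ‖wdzbar (f k) 0‖ ^ 2 = 1) ∧
    ¬ ∃ ρ₀ : ℝ, 0 < ρ₀ ∧ ∀ k : ℕ, 0 < k → ball (0:ℂ) ρ₀ ⊆ f k '' ball (0:ℂ) 1 := by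
  have hre : ∀ k z, (f k z).re = k * z.re + (z.re * z.re + z.im * z.im) / 4 := by
    intro k z
    rw [hf, Complex.sq_norm, Complex.normSq_apply]
    simp [-Complex.ofReal_div, -Complex.ofReal_add, -Complex.ofReal_mul]
  have him : ∀ k z, (f k z).im = (k : ℝ)⁻¹ * z.im := by
    intro k z
    rw [hf]
    simp [-Complex.ofReal_div, -Complex.ofReal_pow]
    ring
  have hfun : ∀ k, f k = fun z : ℂ =>
      ((((k : ℝ) * z.re + (z.re * z.re + z.im * z.im) / 4 : ℝ)) : ℂ)
        + Complex.I * (((k : ℝ)⁻¹ * z.im : ℝ) : ℂ) := by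
    intro k
    funext z
    apply Complex.ext
    · rw [hre]
      simp only [Complex.add_re, Complex.ofReal_re, Complex.I_mul_re, Complex.ofReal_im]
      ring
    · rw [him]
      simp only [Complex.add_im, Complex.ofReal_re, Complex.I_mul_im, Complex.ofReal_im]
      ring
  have hd1 : ∀ k w, fderiv ℝ (f k) w 1 = ((k + 1 / 2 * w.re : ℝ) : ℂ) := by
    intro k w
    rw [hfun k, (fk_hasFDerivAt k (k : ℝ)⁻¹ w).fderiv]
    simp
  have hdI : ∀ k w, fderiv ℝ (f k) w Complex.I
      = ((1 / 2 * w.im : ℝ) : ℂ) + Complex.I * (((k : ℝ)⁻¹ : ℝ) : ℂ) := by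
    intro k w
    rw [hfun k, (fk_hasFDerivAt k (k : ℝ)⁻¹ w).fderiv]
    simp
  refine ⟨fun k hk => ⟨fun z _ => ?_, ?_, ?_, ?_⟩, ?_⟩
  · unfold lap
    simp only [hd1, hdI]
    have hr : HasFDerivAt (fun z : ℂ => z.re) Complex.reCLM z := Complex.reCLM.hasFDerivAt
    have hi : HasFDerivAt (fun z : ℂ => z.im) Complex.imCLM z := Complex.imCLM.hasFDerivAt
    have h1 := Complex.ofRealCLM.hasFDerivAt.comp z ((hr.const_mul (1 / 2 : ℝ)).const_add (k : ℝ))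
    have h2 := (Complex.ofRealCLM.hasFDerivAt.comp z (hi.const_mul (1 / 2 : ℝ))).add_const
      (Complex.I * (((k : ℝ)⁻¹ : ℝ) : ℂ))
    have e1 : fderiv ℝ (fun w : ℂ => ((k + 1 / 2 * w.re : ℝ) : ℂ)) z = _ := h1.fderiv
    have e2 : fderiv ℝ (fun w : ℂ => ((1 / 2 * w.im : ℝ) : ℂ)
      + Complex.I * (((k : ℝ)⁻¹ : ℝ) : ℂ)) z = _ := h2.fderiv
    rw [e1, e2]
    simp
    norm_num
  · intro z hz w hw h
    have hk1 : (1 : ℝ) ≤ k := by exact_mod_cast hk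
    have h1 := congrArg Complex.re h
    have h2 := congrArg Complex.im h
    rw [hre, hre] at h1
    rw [him, him] at h2
    have hy : z.im = w.im := mul_left_cancel₀ (by positivity) h2
    rw [mem_ball_zero_iff] at hz hw
    have hz' := (abs_lt.1 ((Complex.abs_re_le_norm z).trans_lt hz)).1
    have hw' := (abs_lt.1 ((Complex.abs_re_le_norm w).trans_lt hw)).1
    refine Complex.ext ?_ hy
    rw [hy] at h1
    have h3 : (z.re - w.re) * (k + (z.re + w.re) / 4) = 0 := by linarith
    rcases mul_eq_zero.1 h3 with h4 | h4
    · linarith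
    · linarith
  · rw [hf]
    simp
  · have hk0 : (k : ℝ) ≠ 0 := by positivity
    have e1 : wdz (f k) 0 = (((k + (k : ℝ)⁻¹) / 2 : ℝ) : ℂ) := by
      unfold wdz
      rw [hd1, hdI]
      apply Complex.ext <;> simp
    have e2 : wdzbar (f k) 0 = (((k - (k : ℝ)⁻¹) / 2 : ℝ) : ℂ) := by
      unfold wdzbar
      rw [hd1, hdI]
      apply Complex.ext <;> simp
      ring
    rw [e1, e2, Complex.norm_real, Complex.norm_real, Real.norm_eq_abs, Real.norm_eq_abs,
      sq_abs, sq_abs]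
    field_simp
    ring
  · rintro ⟨ρ, hρ, h⟩
    obtain ⟨k, hk⟩ := exists_nat_gt (2 / ρ)
    have hk0 : (0 : ℝ) < k := lt_trans (by positivity) hk
    have hmem : (Complex.I * ((ρ / 2 : ℝ) : ℂ)) ∈ ball (0 : ℂ) ρ := by
      rw [mem_ball_zero_iff, norm_mul, Complex.norm_I, Complex.norm_real, Real.norm_eq_abs,
        abs_of_pos (by positivity)]
      linarith
    obtain ⟨z, hz, hzeq⟩ := h k (by exact_mod_cast hk0) hmem
    have h2 := congrArg Complex.im hzeq
    rw [him, Complex.I_mul_im, Complex.ofReal_re] at h2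
    rw [mem_ball_zero_iff] at hz
    have hz' := (abs_lt.1 ((Complex.abs_im_le_norm z).trans_lt hz)).2
    rw [div_lt_iff₀ hρ] at hk
    have h3 : z.im = k * (ρ / 2) := by
      rw [← h2]
      field_simp
    linarith
end
end
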